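/- (Aleksandrov's spectral averaging.) For every nonnegative Borel measurable function f on 𝕋, the function γ ↦ ∫_𝕋 f dσ_γ is Borel measurable on 𝕋 and ∫_𝕋 (∫_𝕋 f(ξ) dσ_γ(ξ)) dm(γ) = ∫_𝕋 f dm (equality in [0, ∞]). -/

import Mathlib

/-!
On the circle, the right-hand side of the Clark identity is again a Herglotz kernel: with
`H_w(ξ) = (ξ + w) / (ξ - w)` it reads `∫ H_z dσ_γ = H_{θ(z)}(γ)`. By the Schwarz lemma `θ(z)`
lies in the open disc, so this is continuous in `γ`, and integrating over `γ` gives `1`, because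
every `H_w` with `|w| < 1` has mean `1` over the circle. Thus the mixture `∫ σ_γ dm(γ)` and `m`
itself have the same integrals against all Herglotz kernels.

Herglotz kernels determine measures on the circle: `(H_z + 1) / 2` is the resolvent
`(1 - z ξ̄)⁻¹`, from which the powers `ξ̄ⁿ` are recovered one at a time by dividing by `z` and
letting `z → 0`; hence a closed subspace of `C(𝕋)` stable under conjugation that contains every
`H_z` is everything.
-/

open MeasureTheory Complex Set

/-- Normalized Lebesgue (Haar) measure on the unit circle `𝕋 ⊆ ℂ`. -/
noncomputable def circleHaar : Measure ℂ :=
  (ENNReal.ofReal (2 * Real.pi)⁻¹) •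
    (volume.restrict (Set.Ioc 0 (2 * Real.pi))).map (circleMap 0 1)

open Filter Topology
open scoped UnitDisc ComplexConjugate BoundedContinuousFunction ENNReal

theorem smul_pow_succ_mul_inverse_one_sub_smul {R A : Type*} [CommRing R] [Ring A] [Algebra R A]
    {z : R} {u : A} (hz : IsUnit (1 - z • u)) (n : ℕ) :
    z • (u ^ (n + 1) * Ring.inverse (1 - z • u)) = u ^ n * Ring.inverse (1 - z • u) - u ^ n := by
  have hcancel := Ring.mul_inverse_cancel _ hz
  rw [sub_mul, one_mul, smul_mul_assoc, sub_eq_iff_eq_add, ← sub_eq_iff_eq_add'] at hcancel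
  rw [pow_succ, mul_assoc, ← mul_smul_comm, ← hcancel, mul_sub, mul_one]

theorem pow_mem_of_inverse_one_sub_smul_mem {𝕜 A : Type*} [NontriviallyNormedField 𝕜]
    [NormedRing A] [NormedAlgebra 𝕜 A] [CompleteSpace A] {V : Submodule 𝕜 A}
    (hV : IsClosed (V : Set A)) {u : A}
    (hu : ∀ᶠ z : 𝕜 in 𝓝[≠] 0, Ring.inverse (1 - z • u) ∈ V) (n : ℕ) : u ^ n ∈ V := by
  have htendsto : Tendsto (fun z : 𝕜 => 1 - z • u) (𝓝[≠] 0) (𝓝 1) :=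
    (Continuous.tendsto' (by fun_prop) _ _ (by simp)).mono_left nhdsWithin_le_nhds
  have hunit : ∀ᶠ z : 𝕜 in 𝓝[≠] 0, IsUnit (1 - z • u) :=
    htendsto.eventually (Units.isOpen.mem_nhds isUnit_one)
  have hlimit (n : ℕ) (hn : ∀ᶠ z : 𝕜 in 𝓝[≠] 0, u ^ n * Ring.inverse (1 - z • u) ∈ V) :
      u ^ n ∈ V := by
    have hinverse := (NormedRing.inverse_continuousAt (1 : Aˣ)).tendsto.comp htendsto
    exact hV.mem_of_tendsto (by simpa using hinverse.const_mul (u ^ n)) hn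
  suffices h : ∀ᶠ z : 𝕜 in 𝓝[≠] 0, u ^ n * Ring.inverse (1 - z • u) ∈ V from hlimit n h
  induction n with
  | zero => simpa using hu
  | succ n ih =>
    filter_upwards [ih, hunit, self_mem_nhdsWithin] with z hz hunitz hz0
    rw [← V.smul_mem_iff hz0, smul_pow_succ_mul_inverse_one_sub_smul hunitz]
    exact V.sub_mem hz (hlimit n ih)

theorem elemental_subset_of_pow_mem {R A : Type*} [CommSemiring R] [StarRing R]
    [TopologicalSpace A] [Semiring A] [StarRing A] [IsTopologicalSemiring A] [ContinuousStar A]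
    [Algebra R A] [StarModule R A] {V : Submodule R A} (hV : IsClosed (V : Set A))
    (hstar : ∀ a ∈ V, star a ∈ V) {u : A} (hu : u ∈ unitary A) (hpow : ∀ n : ℕ, u ^ n ∈ V) :
    (StarAlgebra.elemental R u : Set A) ⊆ V := by
  have hzpow : ∀ n : ℤ, ((⟨u, hu⟩ ^ n : unitary A) : A) ∈ V
    | .ofNat n => by simpa using hpow n
    | .negSucc n => by rw [zpow_negSucc]; exact hstar _ (hpow (n + 1))
  have hclosure : Submonoid.closure ({u} ∪ star {u}) ≤
      (Subgroup.zpowers (⟨u, hu⟩ : unitary A)).toSubmonoid.map (unitary A).subtype := by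
    rw [Submonoid.closure_le, union_subset_iff, star_singleton, singleton_subset_iff,
      singleton_subset_iff]
    exact ⟨⟨_, Subgroup.mem_zpowers _, rfl⟩,
      ⟨_, Subgroup.inv_mem _ (Subgroup.mem_zpowers _), rfl⟩⟩
  refine closure_minimal (fun a ha => ?_) hV
  rw [SetLike.mem_coe, ← StarSubalgebra.mem_toSubalgebra, ← Subalgebra.mem_toSubmodule,
    StarAlgebra.adjoin_eq_span] at ha
  refine Submodule.span_le.2 (fun b hb => ?_) ha
  obtain ⟨_, ⟨n, rfl⟩, rfl⟩ := hclosure hb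
  exact hzpow n

theorem measurable_measure_of_isClosed {Ω X : Type*} [MeasurableSpace Ω] [TopologicalSpace X]
    [MeasurableSpace X] [BorelSpace X] {τ : Ω → Measure X} [∀ ω, IsFiniteMeasure (τ ω)]
    (hτ : ∀ F : Set X, IsClosed F → Measurable fun ω => τ ω F) : Measurable τ :=
  .measure_of_isPiSystem (by rw [BorelSpace.measurable_eq (α := X), borel_eq_generateFrom_isClosed])
    isPiSystem_isClosed hτ (hτ univ isClosed_univ)

theorem measurable_measure_of_measurable_integral {Ω X : Type*} [MeasurableSpace Ω]
    [TopologicalSpace X] [HasOuterApproxClosed X] [MeasurableSpace X] [BorelSpace X]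
    {τ : Ω → Measure X} [∀ ω, IsFiniteMeasure (τ ω)]
    (hτ : ∀ f : X →ᵇ ℝ, Measurable fun ω => ∫ x, f x ∂τ ω) : Measurable τ := by
  refine measurable_measure_of_isClosed fun F hF => ?_
  refine measurable_of_tendsto_metrizable (fun n => ?_)
    (tendsto_pi_nhds.2 fun ω => HasOuterApproxClosed.tendsto_lintegral_apprSeq hF (τ ω))
  let f : X →ᵇ ℝ := ⟨⟨fun x => hF.apprSeq n x, by fun_prop⟩, (hF.apprSeq n).map_bounded'⟩
  have hlintegral (ω : Ω) : ∫⁻ x, hF.apprSeq n x ∂τ ω = ENNReal.ofReal (∫ x, f x ∂τ ω) := by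
    rw [← ENNReal.ofReal_toReal ((hF.apprSeq n).lintegral_lt_top_of_nnreal (τ ω)).ne,
      BoundedContinuousFunction.toReal_lintegral_coe_eq_integral]
    rfl
  simpa only [hlintegral] using (hτ f).ennreal_ofReal

theorem integral_measure_bind {Ω X E : Type*} [MeasurableSpace Ω] [MeasurableSpace X]
    [NormedAddCommGroup E] [NormedSpace ℝ E] {μ : Measure Ω} {τ : Ω → Measure X}
    (hτ : Measurable τ) {f : X → E} (hf : Integrable f (μ.bind τ)) :
    ∫ x, f x ∂μ.bind τ = ∫ ω, ∫ x, f x ∂τ ω ∂μ := by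
  let κ : ProbabilityTheory.Kernel Ω X := ⟨τ, hτ⟩
  have hbind : μ.bind τ = (κ.comp (.const Unit μ)) () :=
    Measure.comp_eq_comp_const_apply (κ := κ)
  rw [hbind] at hf ⊢
  exact ProbabilityTheory.Kernel.integral_comp (η := κ) (κ := .const Unit μ) (a := ()) hf

section Subtype

variable {α : Type*} [MeasurableSpace α] {μ : Measure α} {s : Set α}

theorem map_coe_comap_coe (hs : MeasurableSet s) (hμ : μ sᶜ = 0) :
    (μ.comap ((↑) : s → α)).map (↑) = μ := by
  rw [map_comap_subtype_coe hs, Measure.restrict_eq_self_of_ae_mem hμ]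

theorem isProbabilityMeasure_comap_coe [IsProbabilityMeasure μ] (hs : MeasurableSet s)
    (hμ : μ sᶜ = 0) : IsProbabilityMeasure (μ.comap ((↑) : s → α)) :=
  (MeasurableEmbedding.subtype_coe hs).isProbabilityMeasure_comap
    (by simpa [mem_ae_iff] using hμ)

end Subtype

section IntegralFunctional

variable {X : Type*} [TopologicalSpace X] [CompactSpace X] [MeasurableSpace X] [BorelSpace X]
  (μ : Measure X) [IsFiniteMeasure μ]

/-- Integration against a finite measure `μ`, as a bounded linear functional on `C(X, ℂ)`. -/
noncomputable def integralFunctional : C(X, ℂ) →L[ℂ] ℂ :=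
  L1.integralCLM' ℂ ∘L ContinuousMap.toLp 1 μ ℂ

theorem integralFunctional_apply (g : C(X, ℂ)) : integralFunctional μ g = ∫ x, g x ∂μ := by
  rw [integralFunctional, ContinuousLinearMap.comp_apply, ← L1.integral_eq',
    L1.integral_eq_integral]
  exact integral_congr_ae (ContinuousMap.coeFn_toLp μ g)

theorem integralFunctional_star (g : C(X, ℂ)) :
    integralFunctional μ (star g) = star (integralFunctional μ g) := by
  simp only [integralFunctional_apply]
  exact integral_conj

theorem integral_eq_re_integralFunctional (f : X →ᵇ ℝ) :
    ∫ x, f x ∂μ =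
      (integralFunctional μ ((⟨_, continuous_ofReal⟩ : C(ℝ, ℂ)).comp f.toContinuousMap)).re := by
  rw [integralFunctional_apply, ← ofReal_re (∫ x, f x ∂μ), ← integral_complex_ofReal]
  rfl

end IntegralFunctional

local notation "𝕋" => Metric.sphere (0 : ℂ) 1

theorem conj_mul_self_unitCircle (ξ : 𝕋) : conj (ξ : ℂ) * ξ = 1 := by
  simp [conj_mul']

theorem sub_unitDisc_ne_zero (ξ : 𝕋) (z : 𝔻) : (ξ : ℂ) - z ≠ 0 := fun h =>
  z.norm_lt_one.ne (sub_eq_zero.1 h ▸ norm_eq_of_mem_sphere ξ)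

/-- The Herglotz kernel `ξ ↦ (ξ + z) / (ξ - z)` of a point `z` of the unit disc, as a continuous
function on the unit circle. -/
noncomputable def herglotzKernel (z : 𝔻) : C(𝕋, ℂ) where
  toFun ξ := (ξ + z) / (ξ - z)
  continuous_toFun := .div (by fun_prop) (by fun_prop) fun ξ => sub_unitDisc_ne_zero ξ z

theorem herglotzKernel_apply (z : 𝔻) (ξ : 𝕋) : herglotzKernel z ξ = (ξ + z) / (ξ - z) := rfl

theorem herglotzKernel_zero : herglotzKernel 0 = 1 := by
  ext ξ
  simp [herglotzKernel_apply, ne_zero_of_mem_unit_sphere ξ]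

theorem inverse_one_sub_smul_star_id (z : 𝔻) :
    Ring.inverse (1 - (z : ℂ) • star (ContinuousMap.restrict 𝕋 (.id ℂ))) =
      (2⁻¹ : ℂ) • (herglotzKernel z + 1) := by
  have hmul : (1 - (z : ℂ) • star (ContinuousMap.restrict 𝕋 (.id ℂ))) *
      ((2⁻¹ : ℂ) • (herglotzKernel z + 1)) = 1 := by
    ext ξ
    change (1 - z * conj (ξ : ℂ)) * (2⁻¹ * ((ξ + z) / (ξ - z) + 1)) = 1
    have hsub := sub_unitDisc_ne_zero ξ z
    field_simp
    linear_combination (-2 * z : ℂ) * conj_mul_self_unitCircle ξ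
  exact Ring.inverse_unit (Units.mkOfMulEqOne _ _ hmul)

theorem eq_top_of_herglotzKernel_mem {V : Submodule ℂ C(𝕋, ℂ)}
    (hV : IsClosed (V : Set C(𝕋, ℂ))) (hstar : ∀ g ∈ V, star g ∈ V)
    (hherglotz : ∀ z, herglotzKernel z ∈ V) : V = ⊤ := by
  set ζ : C(𝕋, ℂ) := ContinuousMap.restrict 𝕋 (.id ℂ)
  have hresolvent : ∀ᶠ z : ℂ in 𝓝[≠] 0, Ring.inverse (1 - z • star ζ) ∈ V := by
    filter_upwards [nhdsWithin_le_nhds (Metric.ball_mem_nhds (0 : ℂ) one_pos)] with z hz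
    rw [← UnitDisc.coe_mk z (by simpa using hz), inverse_one_sub_smul_star_id]
    exact V.smul_mem _ (V.add_mem (hherglotz _) (herglotzKernel_zero ▸ hherglotz 0))
  have hpow (n : ℕ) : ζ ^ n ∈ V := by
    simpa using hstar _ (pow_mem_of_inverse_one_sub_smul_mem hV hresolvent n)
  have hunitary : ζ ∈ unitary C(𝕋, ℂ) := by
    rw [Unitary.mem_iff_star_mul_self]
    exact ContinuousMap.ext conj_mul_self_unitCircle
  have helemental := elemental_subset_of_pow_mem hV hstar hunitary hpow
  rw [ContinuousMap.elemental_id_eq_top] at helemental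
  exact top_unique helemental

theorem ext_of_integral_herglotzKernel {μ ν : Measure 𝕋} [IsFiniteMeasure μ] [IsFiniteMeasure ν]
    (h : ∀ z, ∫ ξ, herglotzKernel z ξ ∂μ = ∫ ξ, herglotzKernel z ξ ∂ν) : μ = ν := by
  simp only [← integralFunctional_apply] at h
  have hlocus :
      (integralFunctional μ).toLinearMap.eqLocus (integralFunctional ν).toLinearMap = ⊤ := by
    refine eq_top_of_herglotzKernel_mem ?_ (fun g hg => ?_) h
    · exact isClosed_eq (integralFunctional μ).continuous (integralFunctional ν).continuous
    · simp only [LinearMap.mem_eqLocus, ContinuousLinearMap.coe_coe] at hg ⊢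
      rw [integralFunctional_star, integralFunctional_star, hg]
  have hfunctional : integralFunctional μ = integralFunctional ν :=
    ContinuousLinearMap.coe_injective (LinearMap.eqLocus_eq_top.1 hlocus)
  refine ext_of_forall_integral_eq_of_IsFiniteMeasure fun f => ?_
  rw [integral_eq_re_integralFunctional, integral_eq_re_integralFunctional, hfunctional]

section MeasurableFamily

variable {Ω : Type*} [MeasurableSpace Ω] {τ : Ω → Measure 𝕋} [∀ ω, IsFiniteMeasure (τ ω)]

theorem measurable_integralFunctional_of_herglotzKernel
    (hτ : ∀ z, Measurable fun ω => integralFunctional (τ ω) (herglotzKernel z)) (g : C(𝕋, ℂ)) :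
    Measurable fun ω => integralFunctional (τ ω) g := by
  let V : Submodule ℂ C(𝕋, ℂ) :=
    { carrier := {g | Measurable fun ω => integralFunctional (τ ω) g}
      add_mem' := fun hg hh => by simpa using! hg.add hh
      zero_mem' := by simp
      smul_mem' := fun c g hg => by simpa using! hg.const_mul c }
  have hV : IsClosed (V : Set C(𝕋, ℂ)) := IsSeqClosed.isClosed fun g g₀ hg hlim =>
    measurable_of_tendsto_metrizable hg <| tendsto_pi_nhds.2 fun ω =>
      ((integralFunctional (τ ω)).continuous.tendsto g₀).comp hlim
  have hstar (g) (hg : g ∈ V) : star g ∈ V := by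
    simpa [V, integralFunctional_star] using! continuous_conj.measurable.comp hg
  exact (eq_top_of_herglotzKernel_mem hV hstar hτ).ge (Submodule.mem_top (x := g))

theorem measurable_measure_of_herglotzKernel
    (hτ : ∀ z, Measurable fun ω => ∫ ξ, herglotzKernel z ξ ∂τ ω) : Measurable τ := by
  simp only [← integralFunctional_apply] at hτ
  refine measurable_measure_of_measurable_integral fun f => ?_
  simp only [integral_eq_re_integralFunctional]
  exact measurable_re.comp (measurable_integralFunctional_of_herglotzKernel hτ _)

end MeasurableFamily

theorem circleHaar_compl_sphere : circleHaar 𝕋ᶜ = 0 := by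
  have hrange : circleMap 0 1 ⁻¹' 𝕋 = univ :=
    preimage_eq_univ_iff.2 (range_subset_iff.2 (circleMap_mem_sphere 0 zero_le_one))
  rw [circleHaar, Measure.smul_apply,
    Measure.map_apply (by fun_prop) Metric.isClosed_sphere.measurableSet.compl, preimage_compl,
    hrange, compl_univ, measure_empty, smul_zero]

instance isProbabilityMeasure_circleHaar : IsProbabilityMeasure circleHaar := by
  refine ⟨?_⟩
  rw [circleHaar, Measure.smul_apply, Measure.map_apply (by fun_prop) .univ, preimage_univ,
    Measure.restrict_apply_univ, Real.volume_Ioc, sub_zero, smul_eq_mul,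
    ← ENNReal.ofReal_mul (by positivity), inv_mul_cancel₀ Real.two_pi_pos.ne', ENNReal.ofReal_one]

theorem integral_circleHaar {g : ℂ → ℂ} (hg : Measurable g) :
    ∫ ξ, g ξ ∂circleHaar = Real.circleAverage g 0 1 := by
  rw [circleHaar, integral_smul_measure, integral_map (by fun_prop) hg.aestronglyMeasurable,
    Real.circleAverage_def, intervalIntegral.integral_of_le Real.two_pi_pos.le,
    ENNReal.toReal_ofReal (by positivity)]

theorem circleAverage_herglotz (z : 𝔻) :
    Real.circleAverage (fun ξ => (ξ + z) / (ξ - z)) 0 1 = 1 := by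
  have hreflect : EqOn (fun ξ : ℂ => (ξ⁻¹ + z) / (ξ⁻¹ - z))
      (fun ξ => (1 + z * ξ) / (1 - z * ξ)) (Metric.sphere 0 |1|) := fun ξ hξ => by
    have hξ0 : ξ ≠ 0 := ne_zero_of_mem_sphere (by simp) ⟨ξ, hξ⟩
    dsimp only
    rw [← mul_div_mul_right (ξ⁻¹ + z) _ hξ0, add_mul, sub_mul, inv_mul_cancel₀ hξ0]
  have hholomorphic : DifferentiableOn ℂ (fun ξ : ℂ => (1 + z * ξ) / (1 - z * ξ))
      (Metric.closedBall 0 1) := .div (by fun_prop) (by fun_prop) fun ξ hξ => by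
    have hlt : ‖(z : ℂ) * ξ‖ < 1 := by
      rw [norm_mul]
      exact mul_lt_one_of_nonneg_of_lt_one_left (norm_nonneg _) z.norm_lt_one (by simpa using hξ)
    exact (isUnit_one_sub_of_norm_lt_one hlt).ne_zero
  rw [← Real.circleAverage_zero_one_congr_inv, Real.circleAverage_congr_sphere hreflect]
  simpa using (hholomorphic.diffContOnCl_ball (by simp)).circleAverage (c := 0) (R := 1)

/-- Normalized arc length `circleHaar`, as a measure on the circle itself rather than on `ℂ`. -/
noncomputable def arcMeasure : Measure 𝕋 := circleHaar.comap (↑)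

theorem map_coe_arcMeasure : arcMeasure.map (↑) = circleHaar :=
  map_coe_comap_coe Metric.isClosed_sphere.measurableSet circleHaar_compl_sphere

instance isProbabilityMeasure_arcMeasure : IsProbabilityMeasure arcMeasure :=
  isProbabilityMeasure_comap_coe Metric.isClosed_sphere.measurableSet circleHaar_compl_sphere

theorem integral_herglotzKernel_arcMeasure (z : 𝔻) :
    ∫ ξ, herglotzKernel z ξ ∂arcMeasure = 1 := by
  have hcircle : MeasurableSet 𝕋 := Metric.isClosed_sphere.measurableSet
  rw [← circleAverage_herglotz z, ← integral_circleHaar (by fun_prop), ← map_coe_arcMeasure,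
    (MeasurableEmbedding.subtype_coe hcircle).integral_map]
  rfl

/-- `σ` is the family of Aleksandrov–Clark measures of the self-map `θ` of the unit disc. The usual
right-hand side `(1 + γ̄ θ(z)) / (1 - γ̄ θ(z))` is written as the Herglotz kernel of `θ z` at `γ`,
which is the same because `|γ| = 1`. -/
def IsClarkFamily (θ : 𝔻 → 𝔻) (σ : 𝕋 → Measure 𝕋) : Prop :=
  ∀ γ z, ∫ ξ, herglotzKernel z ξ ∂σ γ = herglotzKernel (θ z) γ

theorem herglotzKernel_eq_conj_mul (w : 𝔻) (γ : 𝕋) :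
    herglotzKernel w γ = (1 + conj (γ : ℂ) * w) / (1 - conj (γ : ℂ) * w) := by
  have hγ := conj_mul_self_unitCircle γ
  rw [← hγ, ← mul_add, ← mul_sub, mul_div_mul_left _ _ (left_ne_zero_of_mul_eq_one hγ),
    herglotzKernel_apply]

namespace IsClarkFamily

variable {θ : 𝔻 → 𝔻} {σ : 𝕋 → Measure 𝕋}

theorem measurable [∀ γ, IsFiniteMeasure (σ γ)] (hσ : IsClarkFamily θ σ) : Measurable σ := by
  refine measurable_measure_of_herglotzKernel fun z => ?_
  simp only [hσ _ z]
  exact (herglotzKernel (θ z)).continuous.measurable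

variable [∀ γ, IsProbabilityMeasure (σ γ)]

theorem bind_eq (hσ : IsClarkFamily θ σ) : arcMeasure.bind σ = arcMeasure := by
  have hprob : IsProbabilityMeasure (arcMeasure.bind σ) :=
    isProbabilityMeasure_bind hσ.measurable.aemeasurable (ae_of_all _ inferInstance)
  refine ext_of_integral_herglotzKernel fun z => ?_
  have hintegrable : Integrable (herglotzKernel z) (arcMeasure.bind σ) :=
    (herglotzKernel z).continuous.integrable_of_hasCompactSupport (.of_compactSpace _)
  rw [integral_measure_bind hσ.measurable hintegrable]
  simp only [hσ _ z, integral_herglotzKernel_arcMeasure]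

theorem lintegral_lintegral (hσ : IsClarkFamily θ σ) {f : 𝕋 → ℝ≥0∞} (hf : Measurable f) :
    ∫⁻ γ, ∫⁻ ξ, f ξ ∂σ γ ∂arcMeasure = ∫⁻ ξ, f ξ ∂arcMeasure := by
  rw [← Measure.lintegral_bind hσ.measurable.aemeasurable hf.aemeasurable, hσ.bind_eq]

end IsClarkFamily

/-- **Aleksandrov's spectral averaging.** Let `(σ_γ)` be the family of
Aleksandrov–Clark measures of a holomorphic `θ : 𝔻 → ℂ` with `|θ| ≤ 1`,
`θ(0) = 0`.  Then for every nonnegative Borel function `f` on the circle,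
`γ ↦ ∫ f dσ_γ` is measurable on `𝕋` and `∫_𝕋 (∫_𝕋 f dσ_γ) dm(γ) = ∫_𝕋 f dm`. -/
theorem aleksandrov_spectral_averaging
(θ : ℂ → ℂ)
    (hθ_hol : DifferentiableOn ℂ θ (Metric.ball 0 1))
    (hθ_le : ∀ z ∈ Metric.ball (0 : ℂ) 1, ‖θ z‖ ≤ 1)
    (hθ_0 : θ 0 = 0)
    (σ : ℂ → Measure ℂ)
    (hσ_prob : ∀ γ ∈ Metric.sphere (0 : ℂ) 1, IsProbabilityMeasure (σ γ))
    (hσ_supp : ∀ γ ∈ Metric.sphere (0 : ℂ) 1, σ γ (Metric.sphere (0 : ℂ) 1)ᶜ = 0)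
    (hClark : ∀ γ ∈ Metric.sphere (0 : ℂ) 1, ∀ z ∈ Metric.ball (0 : ℂ) 1,
      ∫ ξ, (ξ + z) / (ξ - z) ∂(σ γ)
        = (1 + (starRingEnd ℂ) γ * θ z) / (1 - (starRingEnd ℂ) γ * θ z))
    (f : ℂ → ENNReal) (hf : Measurable f) :
    AEMeasurable (fun γ => ∫⁻ ξ, f ξ ∂(σ γ)) circleHaar ∧
      ∫⁻ γ, (∫⁻ ξ, f ξ ∂(σ γ)) ∂circleHaar = ∫⁻ ξ, f ξ ∂circleHaar := by
  have hθ_lt (z : 𝔻) : ‖θ z‖ < 1 :=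
    (norm_le_norm_of_mapsTo_ball hθ_hol (fun w hw => by simpa using hθ_le w hw) hθ_0
      z.norm_lt_one).trans_lt z.norm_lt_one
  have hcircle : MeasurableSet 𝕋 := Metric.isClosed_sphere.measurableSet
  have hcoe := MeasurableEmbedding.subtype_coe hcircle
  let τ (γ : 𝕋) : Measure 𝕋 := (σ γ).comap (↑)
  have hτ_map (γ : 𝕋) : (τ γ).map (↑) = σ γ := map_coe_comap_coe hcircle (hσ_supp γ γ.2)
  have hτ_prob (γ : 𝕋) : IsProbabilityMeasure (τ γ) :=
    have := hσ_prob γ γ.2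
    isProbabilityMeasure_comap_coe hcircle (hσ_supp γ γ.2)
  have hτ : IsClarkFamily (fun z => .mk (θ z) (hθ_lt z)) τ := fun γ z => by
    rw [herglotzKernel_eq_conj_mul, UnitDisc.coe_mk,
      ← hClark γ γ.2 z (by simpa using z.norm_lt_one), ← hτ_map γ, hcoe.integral_map]
    rfl
  rw [← map_coe_arcMeasure, hcoe.aemeasurable_map_iff, hcoe.lintegral_map, hcoe.lintegral_map]
  simp only [Function.comp_def, ← hτ_map, hcoe.lintegral_map]
  have hf' : Measurable fun ξ : 𝕋 => f ξ := hf.comp measurable_subtype_coe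
  exact ⟨((Measure.measurable_lintegral hf').comp hτ.measurable).aemeasurable,
    hτ.lintegral_lintegral hf'⟩
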